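/- Let Σ_A(ℕ) be a topologically mixing, finitely primitive (BIP) countable Markov shift, f : Σ_A(ℕ) → ℝ satisfying the Walters condition with Var_1 f < ∞ and P(f) < ∞, and for β > 0 let h_β be the Ruelle eigenfunction of L_{βf}. Then there exist constants C_1 and C_2 (independent of β) such that for all β ≥ 1 and all x ∈ Σ_A(ℕ): e^{C_1 β} ≤ h_β(x) ≤ e^{C_2 β}. -/

import Mathlib

open Filter Topology MeasureTheory
open scoped ENNReal

/-- The countable Markov shift over alphabet ℕ determined by the 0-1 matrix `A`. -/
def MarkovShift (A : ℕ → ℕ → Bool) : Type :=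
  {x : ℕ → ℕ // ∀ i, A (x i) (x (i + 1)) = true}

namespace MarkovShift

variable {A : ℕ → ℕ → Bool}

instance : TopologicalSpace (MarkovShift A) :=
  instTopologicalSpaceSubtype

instance : MeasurableSpace (MarkovShift A) := borel _

instance : BorelSpace (MarkovShift A) := ⟨rfl⟩

/-- The shift map. -/
def shift (x : MarkovShift A) : MarkovShift A :=
  ⟨fun n => x.1 (n + 1), fun i => x.2 (i + 1)⟩

/-- The cylinder set determined by a finite word. -/
def cylinder (w : List ℕ) : Set (MarkovShift A) :=
  {x | ∀ i : Fin w.length, x.1 i = w.get i}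

/-- The cylinder set determined by the first `m` coordinates of `x`. -/
def cylOf (x : MarkovShift A) (m : ℕ) : Set (MarkovShift A) :=
  {y | ∀ i < m, y.1 i = x.1 i}

/-- A symbol is admissible when its cylinder is nonempty. -/
def Admissible (A : ℕ → ℕ → Bool) (a : ℕ) : Prop :=
  ∃ x : MarkovShift A, x.1 0 = a

/-- Topologically mixing. -/
def TopologicallyMixing (A : ℕ → ℕ → Bool) : Prop :=
  ∀ a b : ℕ, Admissible A a → Admissible A b →
    ∃ N : ℕ, ∀ n ≥ N, ∃ x : MarkovShift A, x.1 0 = a ∧ (shift^[n] x).1 0 = b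

/-- Finitely primitive (BIP). -/
def FinitelyPrimitive (A : ℕ → ℕ → Bool) : Prop :=
  ∃ (K₀ : ℕ) (F : Finset ℕ), ∀ a b : ℕ, Admissible A a → Admissible A b →
    ∃ w : List ℕ, w.length = K₀ ∧ (∀ c ∈ w, c ∈ F) ∧
      List.Chain' (fun u v => A u v = true) (a :: (w ++ [b]))

/-- First coordinate where two distinct points disagree. -/
noncomputable def firstDiff (x y : MarkovShift A) (h : x ≠ y) : ℕ :=
  Nat.find (Function.ne_iff.mp (fun hxy : x.1 = y.1 => h (Subtype.ext hxy)))

open Classical in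
/-- The metric `d(x,y) = r^{t(x,y)}`. -/
noncomputable def dist' (r : ℝ) (x y : MarkovShift A) : ℝ :=
  if h : x = y then 0 else r ^ firstDiff x y h

/-- Birkhoff sum `S_n f`. -/
def birkhoff (f : MarkovShift A → ℝ) (n : ℕ) (x : MarkovShift A) : ℝ :=
  ∑ j ∈ Finset.range n, f (shift^[j] x)

/-- The set of values `|S_n f x - S_n f y|` over pairs agreeing on the first `m` coordinates. -/
def varSet (f : MarkovShift A → ℝ) (n m : ℕ) : Set ℝ :=
  {c | ∃ x y : MarkovShift A, (∀ i < m, x.1 i = y.1 i) ∧ c = |birkhoff f n x - birkhoff f n y|}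

/-- `Var_m (S_n f)`. -/
noncomputable def varBirk (f : MarkovShift A → ℝ) (n m : ℕ) : ℝ := sSup (varSet f n m)

/-- `Var_1 f < ∞`. -/
def Var1Finite (f : MarkovShift A → ℝ) : Prop := BddAbove (varSet f 1 1)

/-- The set whose supremum is `sup_{n ≥ 1} Var_{n+k}(S_n f)`. -/
def waltersSet (f : MarkovShift A → ℝ) (k : ℕ) : Set ℝ :=
  {c | ∃ n, 1 ≤ n ∧ c ∈ varSet f n (n + k)}

/-- `M_k = sup_{n ≥ 1} Var_{n+k}(S_n f)`. -/
noncomputable def waltersSup (f : MarkovShift A → ℝ) (k : ℕ) : ℝ := sSup (waltersSet f k)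

/-- The Walters condition. -/
def SatisfiesWalters (f : MarkovShift A → ℝ) : Prop :=
  (∀ k, 1 ≤ k → BddAbove (waltersSet f k)) ∧
    Tendsto (fun k => waltersSup f k) atTop (𝓝 0)

/-- The partition function `Z_n(f,a) = Σ_{σ^n x = x, x₀ = a} e^{S_n f (x)}`. -/
noncomputable def partitionSum (f : MarkovShift A → ℝ) (n : ℕ) (a : ℕ) : ℝ :=
  ∑' x : {x : MarkovShift A // shift^[n] x = x ∧ x.1 0 = a}, Real.exp (birkhoff f n x.1)

/-- `f` has (finite) Gurevich pressure `p`. -/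
def HasGurevichPressure (f : MarkovShift A → ℝ) (p : ℝ) : Prop :=
  ∀ a : ℕ, Admissible A a →
    (∀ n, 1 ≤ n → Summable fun x : {x : MarkovShift A // shift^[n] x = x ∧ x.1 0 = a} =>
        Real.exp (birkhoff f n x.1)) ∧
    Tendsto (fun n : ℕ => (1 / (n : ℝ)) * Real.log (partitionSum f n a)) atTop (𝓝 p)

/-- σ-invariant Borel probability measure. -/
def IsInvariantProb (μ : Measure (MarkovShift A)) : Prop :=
  IsProbabilityMeasure μ ∧ μ.map shift = μ

/-- `m(f)`, the maximal ergodic average. -/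
noncomputable def mf (f : MarkovShift A → ℝ) : ℝ :=
  sSup {c | ∃ μ : Measure (MarkovShift A),
    IsInvariantProb μ ∧ Integrable f μ ∧ ∫ x, f x ∂μ = c}

/-- A maximizing measure for `f`. -/
def IsMaximizing (f : MarkovShift A → ℝ) (μ : Measure (MarkovShift A)) : Prop :=
  IsInvariantProb μ ∧ Integrable f μ ∧ ∫ x, f x ∂μ = mf f

/-- Bounded real valued function. -/
def BoundedFun (g : MarkovShift A → ℝ) : Prop := ∃ C, ∀ x, |g x| ≤ C

/-- A bounded calibrated sub-action for `f`. -/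
def IsCalibratedSubaction (f V : MarkovShift A → ℝ) : Prop :=
  Continuous V ∧ BoundedFun V ∧
    (∀ x, f x + V x - V (shift x) - mf f ≤ 0) ∧
    (∀ y, ∃ x, shift x = y ∧ f x + V x - V (shift x) - mf f = 0)

/-- The Ruelle transfer operator `(L_g u)(x) = Σ_{σ y = x} e^{g(y)} u(y)`. -/
noncomputable def ruelle (g u : MarkovShift A → ℝ) (x : MarkovShift A) : ℝ :=
  ∑' y : {y : MarkovShift A // shift y = x}, Real.exp (g y.1) * u y.1

/-- Ruelle-Perron-Frobenius data for the potential `f` with pressure `p`: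
eigenfunction `h`, eigenmeasure `ν`. -/
def IsRPF (f : MarkovShift A → ℝ) (p : ℝ) (h : MarkovShift A → ℝ)
    (ν : Measure (MarkovShift A)) : Prop :=
  Continuous h ∧ (∀ x, 0 < h x) ∧
    (∀ x, ruelle f h x = Real.exp p * h x) ∧
    IsProbabilityMeasure ν ∧
    (∀ g : MarkovShift A → ℝ, Continuous g → BoundedFun g →
      ∫ x, ruelle f g x ∂ν = Real.exp p * ∫ x, g x ∂ν) ∧
    ∫ x, h x ∂ν = 1

/-- The Gibbs measure `dμ = h dν`. -/
noncomputable def gibbs (h : MarkovShift A → ℝ) (ν : Measure (MarkovShift A)) :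
    Measure (MarkovShift A) :=
  ν.withDensity fun x => ENNReal.ofReal (h x)

/-- The Mañé potential `S_f(x,y)` (with respect to the metric of parameter `r`). -/
noncomputable def manePot (r : ℝ) (f : MarkovShift A → ℝ) (x y : MarkovShift A) : EReal :=
  ⨅ ε : {ε : ℝ // 0 < ε}, ⨆ n : {n : ℕ // 1 ≤ n},
    ⨆ _z : {z : MarkovShift A // dist' r x z < ε.1 ∧ shift^[n.1] z = y},
      ((birkhoff (fun w => f w - mf f) n.1 _z.1 : ℝ) : EReal)

/-- The (topological) support of a measure. -/
def msupport (μ : Measure (MarkovShift A)) : Set (MarkovShift A) :=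
  {x | ∀ U : Set (MarkovShift A), IsOpen U → x ∈ U → 0 < μ U}

end MarkovShift

namespace MarkovShift

section Helpers

variable {A : ℕ → ℕ → Bool}

/-- Cylinder of length `n` around an arbitrary sequence. -/
def cyl (A : ℕ → ℕ → Bool) (n : ℕ) (w : ℕ → ℕ) : Set (MarkovShift A) :=
  {x | ∀ i < n, x.1 i = w i}

/-- Prepend a symbol (junk value when not allowed). -/
def cons (a : ℕ) (x : MarkovShift A) : MarkovShift A :=
  if h : A a (x.1 0) = true then
    ⟨fun n => Nat.casesOn n a x.1, fun i => by cases i with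
      | zero => exact h
      | succ k => exact x.2 k⟩
  else x

theorem cons_zero {a : ℕ} {x : MarkovShift A} (h : A a (x.1 0) = true) : (cons a x).1 0 = a := by
  simp [cons, h]

theorem cons_succ {a : ℕ} {x : MarkovShift A} (h : A a (x.1 0) = true) (n : ℕ) :
    (cons a x).1 (n + 1) = x.1 n := by
  simp [cons, h]

theorem shift_cons {a : ℕ} {x : MarkovShift A} (h : A a (x.1 0) = true) : shift (cons a x) = x := by
  apply Subtype.ext
  funext n
  exact cons_succ h n

theorem cons_shift (y : MarkovShift A) : cons (y.1 0) (shift y) = y := by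
  have h : A (y.1 0) ((shift y).1 0) = true := y.2 0
  apply Subtype.ext
  funext n
  cases n with
  | zero => exact cons_zero h
  | succ n => exact cons_succ h n

theorem shift_iter (n : ℕ) (x : MarkovShift A) (i : ℕ) : (shift^[n] x).1 i = x.1 (i + n) := by
  induction n generalizing x with
  | zero => rfl
  | succ n ih =>
    rw [Function.iterate_succ_apply, ih]
    show x.1 (i + n + 1) = _
    congr 1

theorem continuous_coord (i : ℕ) : Continuous (fun x : MarkovShift A => x.1 i) :=
  (continuous_apply i).comp continuous_subtype_val

theorem isClopen_coord (i : ℕ) (s : Set ℕ) : IsClopen {x : MarkovShift A | x.1 i ∈ s} :=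
  (isClopen_discrete s).preimage (continuous_coord i)

theorem meas_coord (a : ℕ) : MeasurableSet {x : MarkovShift A | A a (x.1 0) = true} :=
  (isClopen_coord (A := A) 0 {b | A a b = true}).isOpen.measurableSet

theorem isClopen_cyl (n : ℕ) (w : ℕ → ℕ) : IsClopen (cyl A n w) := by
  have : cyl A n w = ⋂ i ∈ Finset.range n, {x : MarkovShift A | x.1 i ∈ ({w i} : Set ℕ)} := by
    ext x; simp [cyl]
  rw [this]
  exact isClopen_biInter_finset (fun i _ => isClopen_coord i _)

theorem exists_cyl_subset {U : Set (MarkovShift A)} (hU : IsOpen U) {x : MarkovShift A}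
    (hx : x ∈ U) : ∃ n, 1 ≤ n ∧ cyl A n x.1 ⊆ U := by
  obtain ⟨V, hV, rfl⟩ := isOpen_induced_iff.mp hU
  obtain ⟨s, ⟨w, n, rfl⟩, hxs, hs⟩ :=
    (PiNat.isTopologicalBasis_cylinders (fun _ => ℕ)).exists_subset_of_mem_open hx hV
  refine ⟨n + 1, by omega, fun y hy => hs ?_⟩
  intro i hi
  rw [hy i (by omega)]
  exact hxs i hi

/-- The collection of cylinders of positive length. -/
def cyls (A : ℕ → ℕ → Bool) : Set (Set (MarkovShift A)) :=
  {s | ∃ n w, 1 ≤ n ∧ s = cyl A n w}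

theorem basis_cyls : TopologicalSpace.IsTopologicalBasis (cyls A) := by
  apply TopologicalSpace.isTopologicalBasis_of_isOpen_of_nhds
  · rintro u ⟨n, w, _, rfl⟩
    exact (isClopen_cyl n w).isOpen
  · intro x u hx hu
    obtain ⟨n, hn, h⟩ := exists_cyl_subset hu hx
    exact ⟨_, ⟨n, x.1, hn, rfl⟩, fun i _ => rfl, h⟩

instance : SecondCountableTopology (MarkovShift A) :=
  (Topology.IsInducing.subtypeVal (Y := ℕ → ℕ)
    (t := fun x => ∀ i, A (x i) (x (i + 1)) = true)).secondCountableTopology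

theorem piSystem_cyls : IsPiSystem (cyls A) := by
  rintro _ ⟨n, w, hn, rfl⟩ _ ⟨m, v, hm, rfl⟩ ⟨x, hx1, hx2⟩
  refine ⟨max n m, x.1, by omega, ?_⟩
  ext y
  constructor
  · rintro ⟨h1, h2⟩ i hi
    rcases lt_max_iff.mp hi with h | h
    · rw [h1 i h, hx1 i h]
    · rw [h2 i h, hx2 i h]
  · intro h
    exact ⟨fun i hi => by rw [h i (by omega), hx1 i hi], fun i hi => by rw [h i (by omega), hx2 i hi]⟩

theorem measure_ext {μ ν : Measure (MarkovShift A)} [IsFiniteMeasure μ]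
    (h : ∀ n w, 1 ≤ n → μ (cyl A n w) = ν (cyl A n w)) : μ = ν := by
  apply Measure.ext_of_generateFrom_of_iUnion (cyls A) (fun i => cyl A 1 (fun _ => i))
    basis_cyls.borel_eq_generateFrom piSystem_cyls
  · ext x
    simp [cyl]
  · exact fun i => ⟨1, _, le_rfl, rfl⟩
  · exact fun i => measure_ne_top _ _
  · rintro _ ⟨n, w, hn, rfl⟩
    exact h n w hn

theorem continuous_cons (a : ℕ) : Continuous (cons a : MarkovShift A → MarkovShift A) := by
  have hval : ∀ x : MarkovShift A, (cons a x).1 = if A a (x.1 0) = true then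
      (fun n => Nat.casesOn n a x.1 : ℕ → ℕ) else x.1 := by
    intro x
    by_cases h : A a (x.1 0) = true
    · simp [cons, h]
    · simp [cons, h]
  refine continuous_induced_rng.mpr ?_
  refine continuous_pi fun n => ?_
  show Continuous fun x : MarkovShift A => (cons a x).1 n
  have h1 : ∀ x : MarkovShift A, (cons a x).1 n = if A a (x.1 0) = true then
      (Nat.casesOn n a x.1 : ℕ) else x.1 n := by
    intro x
    rw [hval]
    split_ifs <;> rfl
  simp_rw [h1]
  have : (fun x : MarkovShift A => if A a (x.1 0) = true then
      (Nat.casesOn n a x.1 : ℕ) else x.1 n) =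
      (fun p : ℕ × ℕ × ℕ => if A a p.1 = true then (if n = 0 then a else p.2.1) else p.2.2) ∘
      (fun x : MarkovShift A => (x.1 0, x.1 (n - 1), x.1 n)) := by
    funext x
    cases n <;> simp
  rw [this]
  exact continuous_of_discreteTopology.comp
    ((continuous_coord 0).prodMk ((continuous_coord _).prodMk (continuous_coord _)))

/-- `ENNReal` exponential. -/
noncomputable def Ex (t : ℝ) : ℝ≥0∞ := ENNReal.ofReal (Real.exp t)

theorem Ex_add (s t : ℝ) : Ex (s + t) = Ex s * Ex t := by
  rw [Ex, Real.exp_add, ENNReal.ofReal_mul (Real.exp_pos _).le]; rfl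

theorem Ex_zero : Ex 0 = 1 := by simp [Ex]

theorem Ex_mono {s t : ℝ} (h : s ≤ t) : Ex s ≤ Ex t :=
  ENNReal.ofReal_le_ofReal (Real.exp_le_exp.mpr h)

theorem Ex_pos (s : ℝ) : 0 < Ex s := ENNReal.ofReal_pos.mpr (Real.exp_pos _)

theorem Ex_ne_top (s : ℝ) : Ex s ≠ ∞ := ENNReal.ofReal_ne_top

theorem Ex_measurable {φ : MarkovShift A → ℝ} (hφ : Continuous φ) : Measurable fun x => Ex (φ x) :=
  (Real.measurable_exp.comp hφ.measurable).ennreal_ofReal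

/-- The transfer operator on `ENNReal`-valued functions. -/
noncomputable def Q (φ : MarkovShift A → ℝ) (g : MarkovShift A → ℝ≥0∞) (x : MarkovShift A) : ℝ≥0∞ :=
  ∑' a : ℕ, if A a (x.1 0) = true then Ex (φ (cons a x)) * g (cons a x) else 0

theorem measurable_Qterm {φ : MarkovShift A → ℝ} (hφ : Continuous φ) {g : MarkovShift A → ℝ≥0∞}
    (hg : Measurable g) (a : ℕ) : Measurable fun x : MarkovShift A =>
      if A a (x.1 0) = true then Ex (φ (cons a x)) * g (cons a x) else 0 := by
  refine Measurable.ite (meas_coord a) ?_ measurable_const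
  exact (((Ex_measurable hφ).mul hg).comp (continuous_cons a).measurable)

theorem measurable_Q {φ : MarkovShift A → ℝ} (hφ : Continuous φ) {g : MarkovShift A → ℝ≥0∞}
    (hg : Measurable g) : Measurable (Q φ g) :=
  Measurable.tsum (measurable_Qterm hφ hg)

/-- Dual of `Q`. -/
noncomputable def Qdual (φ : MarkovShift A → ℝ) (ν : Measure (MarkovShift A)) :
    Measure (MarkovShift A) :=
  Measure.sum fun a : ℕ => ((ν.restrict {x | A a (x.1 0) = true}).withDensity
    (fun x => Ex (φ (cons a x)))).map (cons a)

theorem lintegral_Qdual {φ : MarkovShift A → ℝ} (hφ : Continuous φ) (ν : Measure (MarkovShift A))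
    {g : MarkovShift A → ℝ≥0∞} (hg : Measurable g) :
    ∫⁻ x, g x ∂(Qdual φ ν) = ∫⁻ x, Q φ g x ∂ν := by
  have hc := fun a => (continuous_cons (A := A) a).measurable
  unfold Qdual Q
  rw [lintegral_sum_measure, lintegral_tsum (fun a => (measurable_Qterm hφ hg a).aemeasurable)]
  congr 1
  funext a
  rw [lintegral_map hg (hc a)]
  refine (lintegral_withDensity_eq_lintegral_mul _ ((Ex_measurable hφ).comp (hc a))
    (hg.comp (hc a))).trans ?_
  refine (lintegral_indicator (meas_coord a) _).symm.trans ?_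
  congr 1
  funext x
  by_cases h : A a (x.1 0) = true
  · rw [if_pos h]
    exact Set.indicator_of_mem (s := {x : MarkovShift A | A a (x.1 0) = true}) h _
  · rw [if_neg h]
    exact Set.indicator_of_notMem (s := {x : MarkovShift A | A a (x.1 0) = true}) h _

theorem tsum_fiber (F : MarkovShift A → ℝ≥0∞) (x : MarkovShift A) :
    ∑' y : {y : MarkovShift A // shift y = x}, F y.1 =
      ∑' a : ℕ, if A a (x.1 0) = true then F (cons a x) else 0 := by
  let e : {a : ℕ | A a (x.1 0) = true} ≃ {y : MarkovShift A // shift y = x} :=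
    { toFun := fun a => ⟨cons a.1 x, shift_cons a.2⟩
      invFun := fun y => ⟨y.1.1 0, by
        have h := y.1.2 0
        obtain ⟨y, rfl⟩ := y
        exact h⟩
      left_inv := fun a => Subtype.ext (cons_zero a.2)
      right_inv := fun y => by
        obtain ⟨y, rfl⟩ := y
        exact Subtype.ext (cons_shift y) }
  rw [← e.tsum_eq]
  show ∑' a : {a : ℕ | A a (x.1 0) = true}, (fun a => F (cons a x)) a.1 = _
  refine (tsum_subtype {a : ℕ | A a (x.1 0) = true} (fun a => F (cons a x))).trans ?_
  congr 1
  funext a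
  by_cases h : A a (x.1 0) = true
  · rw [if_pos h]
    exact Set.indicator_of_mem (s := {a : ℕ | A a (x.1 0) = true}) h _
  · rw [if_neg h]
    exact Set.indicator_of_notMem (s := {a : ℕ | A a (x.1 0) = true}) h _

theorem Q_mono {φ : MarkovShift A → ℝ} {g g' : MarkovShift A → ℝ≥0∞} (h : ∀ x, g x ≤ g' x) :
    ∀ x, Q φ g x ≤ Q φ g' x := by
  intro x
  refine ENNReal.tsum_le_tsum fun a => ?_
  split_ifs
  · exact mul_le_mul_right (h _) _
  · exact le_rfl

theorem Q_tsum {ι : Type} {φ : MarkovShift A → ℝ} (c : ι → ℝ≥0∞) (g : ι → MarkovShift A → ℝ≥0∞) :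
    Q φ (fun x => ∑' i, c i * g i x) = fun x => ∑' i, c i * Q φ (g i) x := by
  funext x
  unfold Q
  simp_rw [← ENNReal.tsum_mul_left]
  rw [ENNReal.tsum_comm]
  congr 1
  funext a
  split_ifs
  · congr 1
    funext i
    ring
  · simp

theorem Qn_mono {φ : MarkovShift A → ℝ} (n : ℕ) {g g' : MarkovShift A → ℝ≥0∞}
    (h : ∀ x, g x ≤ g' x) : ∀ x, (Q φ)^[n] g x ≤ (Q φ)^[n] g' x := by
  induction n generalizing g g' with
  | zero => exact h
  | succ n ih =>
    intro x
    rw [Function.iterate_succ_apply, Function.iterate_succ_apply]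
    exact ih (Q_mono h) x

theorem Qn_tsum {ι : Type} {φ : MarkovShift A → ℝ} (n : ℕ) (c : ι → ℝ≥0∞)
    (g : ι → MarkovShift A → ℝ≥0∞) :
    (Q φ)^[n] (fun x => ∑' i, c i * g i x) = fun x => ∑' i, c i * (Q φ)^[n] (g i) x := by
  induction n generalizing g with
  | zero => rfl
  | succ n ih =>
    rw [Function.iterate_succ_apply, Q_tsum, ih]
    rfl

theorem Qn_measurable {φ : MarkovShift A → ℝ} (hφ : Continuous φ) (n : ℕ)
    {g : MarkovShift A → ℝ≥0∞} (hg : Measurable g) : Measurable ((Q φ)^[n] g) := by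
  induction n generalizing g with
  | zero => exact hg
  | succ n ih => exact ih (measurable_Q hφ hg)

theorem birkhoff_succ (φ : MarkovShift A → ℝ) (n : ℕ) (x : MarkovShift A) :
    birkhoff φ (n + 1) x = φ x + birkhoff φ n (shift x) := by
  unfold birkhoff
  rw [Finset.sum_range_succ', add_comm]
  rfl

theorem birkhoff_add (φ : MarkovShift A → ℝ) (n m : ℕ) (x : MarkovShift A) :
    birkhoff φ (n + m) x = birkhoff φ n x + birkhoff φ m (shift^[n] x) := by
  unfold birkhoff
  rw [Finset.sum_range_add]
  congr 1
  refine Finset.sum_congr rfl fun j _ => ?_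
  rw [← Function.iterate_add_apply, add_comm]

theorem Q_ge (φ : MarkovShift A → ℝ) (g : MarkovShift A → ℝ≥0∞) (y : MarkovShift A) :
    Ex (φ y) * g y ≤ Q φ g (shift y) := by
  unfold Q
  refine le_trans ?_ (ENNReal.le_tsum (y.1 0))
  have h : A (y.1 0) ((shift y).1 0) = true := y.2 0
  rw [if_pos h, cons_shift]

theorem Qn_ge (φ : MarkovShift A → ℝ) (n : ℕ) (g : MarkovShift A → ℝ≥0∞) (y : MarkovShift A) :
    Ex (birkhoff φ n y) * g y ≤ (Q φ)^[n] g (shift^[n] y) := by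
  induction n generalizing g y with
  | zero => simp [birkhoff, Ex_zero]
  | succ n ih =>
    rw [Function.iterate_succ_apply, Function.iterate_succ_apply]
    refine le_trans ?_ (ih (Q φ g) (shift y))
    rw [birkhoff_succ, add_comm, Ex_add, mul_assoc]
    exact mul_le_mul_right (Q_ge φ g y) _

theorem Qn_cyl_le_one (φ : MarkovShift A → ℝ) (n : ℕ) (w : ℕ → ℕ) (x : MarkovShift A) :
    (Q φ)^[n] ((cyl A n w).indicator fun y => Ex (-birkhoff φ n y)) x ≤ 1 := by
  induction n generalizing w with
  | zero =>
    refine (Set.indicator_le_self _ _ _).trans ?_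
    simp [birkhoff, Ex_zero]
  | succ n ih =>
    rw [Function.iterate_succ_apply]
    refine le_trans (Qn_mono n ?_ x) (ih (fun i => w (i + 1)))
    intro z
    unfold Q
    rw [tsum_eq_single (w 0)]
    · split_ifs with h
      · by_cases hz : cons (w 0) z ∈ cyl A (n + 1) w
        · have hz' : z ∈ cyl A n (fun i => w (i + 1)) := by
            intro i hi
            exact (cons_succ h i).symm.trans (hz (i + 1) (by omega))
          rw [Set.indicator_of_mem hz, Set.indicator_of_mem hz', ← Ex_add, birkhoff_succ,
            shift_cons h]
          apply Ex_mono
          linarith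
        · rw [Set.indicator_of_notMem hz]
          simp
      · exact bot_le
    · intro a ha
      split_ifs with h
      · rw [Set.indicator_of_notMem, mul_zero]
        intro hz
        have := hz 0 (by omega)
        rw [cons_zero h] at this
        exact ha this
      · rfl

end Helpers

end MarkovShift

namespace MarkovShift

section Core

variable {A : ℕ → ℕ → Bool}

theorem Qn_const_mul {φ : MarkovShift A → ℝ} (n : ℕ) (c : ℝ≥0∞) (g : MarkovShift A → ℝ≥0∞) :
    (Q φ)^[n] (fun x => c * g x) = fun x => c * (Q φ)^[n] g x := by
  have := Qn_tsum (φ := φ) n (fun _ : Unit => c) (fun _ => g)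
  simpa using this

theorem Qn_zero {φ : MarkovShift A → ℝ} (n : ℕ) (x : MarkovShift A) :
    (Q φ)^[n] (fun _ => 0) x = 0 := by
  have := Qn_const_mul (φ := φ) n 0 (fun _ => 0)
  simpa using congrFun this x

/-- Lower envelope at level `m`. -/
noncomputable def env (H : MarkovShift A → ℝ≥0∞) (m : ℕ) (x : MarkovShift A) : ℝ≥0∞ :=
  ⨅ y ∈ cyl A m x.1, H y

theorem env_le (H : MarkovShift A → ℝ≥0∞) (m : ℕ) (x : MarkovShift A) : env H m x ≤ H x :=
  iInf₂_le x (fun _ _ => rfl)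

theorem env_mono (H : MarkovShift A → ℝ≥0∞) : Monotone (env H) := by
  intro m n hmn x
  refine le_iInf₂ fun y hy => iInf₂_le y ?_
  exact fun i hi => hy i (lt_of_lt_of_le hi hmn)

theorem iSup_env {H : MarkovShift A → ℝ≥0∞} (hH : Continuous H) (x : MarkovShift A) :
    ⨆ m, env H (m + 1) x = H x := by
  apply le_antisymm (iSup_le fun m => env_le H _ x)
  refine le_of_forall_lt fun c hc => ?_
  obtain ⟨d, hcd, hd⟩ := exists_between hc
  obtain ⟨n, hn, hsub⟩ := exists_cyl_subset (isOpen_lt continuous_const hH) (x := x) hd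
  refine lt_of_lt_of_le hcd (le_trans ?_ (le_iSup _ n))
  refine le_iInf₂ fun y hy => ?_
  exact le_of_lt (hsub (fun i hi => hy i (by omega)))

/-- Extend a finite word by zeros. -/
def extw {m : ℕ} (w : Fin m → ℕ) (i : ℕ) : ℕ := if h : i < m then w ⟨i, h⟩ else 0

theorem env_eq (H : MarkovShift A → ℝ≥0∞) (m : ℕ) :
    env H m = fun x => ∑' w : Fin m → ℕ, (⨅ y ∈ cyl A m (extw w), H y) *
      (cyl A m (extw w)).indicator (fun _ => 1) x := by
  funext x
  have hw : cyl A m (extw (fun i : Fin m => x.1 i)) = cyl A m x.1 := by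
    ext y
    constructor
    · intro h i hi
      have := h i hi
      simpa [extw, hi] using this
    · intro h i hi
      have := h i hi
      simpa [extw, hi] using this
  rw [tsum_eq_single (fun i : Fin m => x.1 i)]
  · rw [hw, Set.indicator_of_mem (show x ∈ cyl A m x.1 from fun _ _ => rfl), mul_one]
    rfl
  · intro w hne
    rw [Set.indicator_of_notMem, mul_zero]
    intro hx
    apply hne
    funext i
    have := hx i i.2
    simpa [extw] using this.symm

theorem cyl_congr {m : ℕ} {w : ℕ → ℕ} {z : MarkovShift A} (hz : z ∈ cyl A m w) :
    cyl A m w = cyl A m z.1 := by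
  ext y
  exact ⟨fun h i hi => (h i hi).trans (hz i hi).symm, fun h i hi => (h i hi).trans (hz i hi)⟩

theorem meas_cyl (n : ℕ) (w : ℕ → ℕ) : MeasurableSet (cyl A n w) :=
  (isClopen_cyl n w).isOpen.measurableSet

theorem env_measurable (H : MarkovShift A → ℝ≥0∞) (m : ℕ) : Measurable (env H m) := by
  rw [env_eq]
  exact Measurable.tsum fun w => (measurable_const.indicator (meas_cyl m _)).const_mul _

theorem lintegral_env (H : MarkovShift A → ℝ≥0∞) (m : ℕ) (ν : Measure (MarkovShift A)) :
    ∫⁻ x, env H m x ∂ν = ∑' w : Fin m → ℕ, (⨅ y ∈ cyl A m (extw w), H y) * ν (cyl A m (extw w)) := by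
  rw [env_eq, lintegral_tsum fun w =>
    ((measurable_const.indicator (meas_cyl m _)).const_mul _).aemeasurable]
  congr 1
  funext w
  rw [lintegral_const_mul _ (measurable_const.indicator (meas_cyl m _)),
    lintegral_indicator (meas_cyl m _)]
  simp

theorem core (φ : MarkovShift A → ℝ) (hφ : Continuous φ) (ν : Measure (MarkovShift A))
    [IsProbabilityMeasure ν] (hdual : Qdual φ ν = ν) (h : MarkovShift A → ℝ) (hcont : Continuous h)
    (hpos : ∀ x, 0 < h x)
    (hQ : Q φ (fun x => ENNReal.ofReal (h x)) = fun x => ENNReal.ofReal (h x))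
    (hmass : ∫⁻ x, ENNReal.ofReal (h x) ∂ν = 1) (K : ℕ) (a b : ℝ)
    (hvar : ∀ n (x y : MarkovShift A), (∀ i < n, x.1 i = y.1 i) →
      birkhoff φ n x ≤ birkhoff φ n y + a)
    (hglue : ∀ (z x : MarkovShift A) (m : ℕ), 1 ≤ m → ∃ y : MarkovShift A,
      (∀ i < m, y.1 i = z.1 i) ∧ shift^[m + K] y = x ∧
        birkhoff φ m z - b ≤ birkhoff φ (m + K) y) (x : MarkovShift A) :
    Real.exp (-(a + b)) ≤ h x ∧ h x ≤ Real.exp (a + b) := by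
  set H : MarkovShift A → ℝ≥0∞ := fun x => ENNReal.ofReal (h x) with hH
  have Hcont : Continuous H := ENNReal.continuous_ofReal.comp hcont
  have hinv1 : ∀ g : MarkovShift A → ℝ≥0∞, Measurable g → ∫⁻ x, Q φ g x ∂ν = ∫⁻ x, g x ∂ν := by
    intro g hg
    rw [← lintegral_Qdual hφ ν hg, hdual]
  have hinv : ∀ n (g : MarkovShift A → ℝ≥0∞), Measurable g →
      ∫⁻ x, (Q φ)^[n] g x ∂ν = ∫⁻ x, g x ∂ν := by
    intro n
    induction n with
    | zero => intro g _; rfl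
    | succ n ih =>
      intro g hg
      rw [Function.iterate_succ_apply, ih _ (measurable_Q hφ hg), hinv1 g hg]
  have hQn : ∀ n, (Q φ)^[n] H = H := fun n => Function.iterate_fixed hQ n
  have hind : ∀ n w, Measurable ((cyl A n w).indicator (fun _ => (1 : ℝ≥0∞))) :=
    fun n w => measurable_const.indicator (meas_cyl n w)
  have hnu : ∀ k n w, ∫⁻ x, (Q φ)^[k] ((cyl A n w).indicator (fun _ => (1 : ℝ≥0∞))) x ∂ν
      = ν (cyl A n w) := by
    intro k n w
    rw [hinv k _ (hind n w), lintegral_indicator (meas_cyl n w)]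
    simp
  have hup : ∀ n (z x : MarkovShift A), (Q φ)^[n] ((cyl A n z.1).indicator (fun _ => (1 : ℝ≥0∞))) x
      ≤ Ex (birkhoff φ n z + a) := by
    intro n z x
    have h1 : ∀ y, (cyl A n z.1).indicator (fun _ => (1 : ℝ≥0∞)) y ≤ Ex (birkhoff φ n z + a) *
        (cyl A n z.1).indicator (fun y => Ex (-birkhoff φ n y)) y := by
      intro y
      by_cases hy : y ∈ cyl A n z.1
      · rw [Set.indicator_of_mem hy, Set.indicator_of_mem hy, ← Ex_add, ← Ex_zero]
        apply Ex_mono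
        have := hvar n y z hy
        linarith
      · rw [Set.indicator_of_notMem hy]
        exact bot_le
    refine (Qn_mono n h1 x).trans ?_
    rw [Qn_const_mul]
    calc _ ≤ Ex (birkhoff φ n z + a) * 1 := mul_le_mul_right (Qn_cyl_le_one φ n z.1 x) _
      _ = _ := mul_one _
  have hlo : ∀ n (z x : MarkovShift A), 1 ≤ n → Ex (birkhoff φ n z - b) ≤
      (Q φ)^[n + K] ((cyl A n z.1).indicator (fun _ => (1 : ℝ≥0∞))) x := by
    intro n z x hn
    obtain ⟨y, hy1, hy2, hy3⟩ := hglue z x n hn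
    have := Qn_ge φ (n + K) ((cyl A n z.1).indicator (fun _ => (1 : ℝ≥0∞))) y
    rw [Set.indicator_of_mem (show y ∈ cyl A n z.1 from hy1), mul_one, hy2] at this
    exact (Ex_mono hy3).trans this
  have hnuup : ∀ n (z : MarkovShift A), ν (cyl A n z.1) ≤ Ex (birkhoff φ n z + a) := by
    intro n z
    rw [← hnu n n z.1]
    refine (lintegral_mono (hup n z)).trans ?_
    simp
  have hnulo : ∀ n (z : MarkovShift A), 1 ≤ n → Ex (birkhoff φ n z - b) ≤ ν (cyl A n z.1) := by
    intro n z hn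
    rw [← hnu (n + K) n z.1]
    refine le_trans ?_ (lintegral_mono (fun x => hlo n z x hn))
    simp
  have hempty : ∀ n w, ¬ (cyl A n w).Nonempty →
      (cyl A n w).indicator (fun _ => (1 : ℝ≥0∞)) = fun _ => 0 := by
    intro n w hw
    rw [Set.not_nonempty_iff_eq_empty.mp hw]
    simp
  have hA : ∀ n w x, (Q φ)^[n] ((cyl A n w).indicator (fun _ => (1 : ℝ≥0∞))) x
      ≤ Ex (a + b) * ν (cyl A n w) ∨ n = 0 := by
    intro n w x
    rcases Nat.eq_zero_or_pos n with h0 | hn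
    · exact Or.inr h0
    left
    by_cases hw : (cyl A n w).Nonempty
    · obtain ⟨z, hz⟩ := hw
      rw [cyl_congr hz]
      calc _ ≤ Ex (birkhoff φ n z + a) := hup n z x
        _ = Ex (a + b) * Ex (birkhoff φ n z - b) := by rw [← Ex_add]; congr 1; ring
        _ ≤ _ := mul_le_mul_right (hnulo n z hn) _
    · rw [hempty n w hw, Qn_zero]
      exact bot_le
  have hB : ∀ n w x, 1 ≤ n → Ex (-(a + b)) * ν (cyl A n w) ≤
      (Q φ)^[n + K] ((cyl A n w).indicator (fun _ => (1 : ℝ≥0∞))) x := by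
    intro n w x hn
    by_cases hw : (cyl A n w).Nonempty
    · obtain ⟨z, hz⟩ := hw
      rw [cyl_congr hz]
      calc _ ≤ Ex (-(a + b)) * Ex (birkhoff φ n z + a) := mul_le_mul_right (hnuup n z) _
        _ = Ex (birkhoff φ n z - b) := by rw [← Ex_add]; congr 1; ring
        _ ≤ _ := hlo n z x hn
    · rw [Set.not_nonempty_iff_eq_empty.mp hw]
      simp
  have hlim : ⨆ m, ∫⁻ x, env H (m + 1) x ∂ν = 1 := by
    rw [← lintegral_iSup (fun m => env_measurable H (m + 1))
      (fun m n hmn => env_mono H (by omega)), ← hmass]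
    congr 1
    funext x
    exact iSup_env Hcont x
  have hlower : ∀ x, Ex (-(a + b)) ≤ H x := by
    intro x
    have h1 : ∀ m, Ex (-(a + b)) * ∫⁻ x, env H (m + 1) x ∂ν ≤ H x := by
      intro m
      rw [← hQn (m + 1 + K)]
      refine le_trans ?_ (Qn_mono (m + 1 + K) (env_le H (m + 1)) x)
      rw [lintegral_env, hQn, env_eq, Qn_tsum, ← ENNReal.tsum_mul_left]
      refine ENNReal.tsum_le_tsum fun w => ?_
      rw [mul_left_comm]
      exact mul_le_mul_right (hB _ _ _ (by omega)) _
    calc Ex (-(a + b)) = Ex (-(a + b)) * ⨆ m, ∫⁻ x, env H (m + 1) x ∂ν := by rw [hlim, mul_one]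
      _ = ⨆ m, Ex (-(a + b)) * ∫⁻ x, env H (m + 1) x ∂ν := ENNReal.mul_iSup _ _
      _ ≤ H x := iSup_le h1
  have hup1 : ∀ m x, (Q φ)^[m + 1] (env H (m + 1)) x ≤ min (H x) (Ex (a + b)) := by
    intro m x
    apply le_min
    · have := Qn_mono (φ := φ) (m + 1) (env_le H (m + 1)) x
      rwa [hQn] at this
    · calc _ ≤ Ex (a + b) * ∫⁻ x, env H (m + 1) x ∂ν := by
            rw [lintegral_env, env_eq, Qn_tsum, ← ENNReal.tsum_mul_left]
            refine ENNReal.tsum_le_tsum fun w => ?_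
            rw [mul_left_comm]
            exact mul_le_mul_right ((hA _ _ _).resolve_right (by omega)) _
        _ ≤ Ex (a + b) * 1 := by
            refine mul_le_mul_right ?_ _
            rw [← hlim]
            exact le_iSup (fun m => ∫⁻ x, env H (m + 1) x ∂ν) m
        _ = _ := mul_one _
  have hge : ∫⁻ x, H x ∂ν ≤ ∫⁻ x, min (H x) (Ex (a + b)) ∂ν := by
    rw [hmass, ← hlim]
    refine iSup_le fun m => ?_
    rw [← hinv (m + 1) _ (env_measurable H (m + 1))]
    exact lintegral_mono (hup1 m)
  have hae : (fun x => min (H x) (Ex (a + b))) =ᵐ[ν] H := by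
    refine ae_eq_of_ae_le_of_lintegral_le (Eventually.of_forall fun x => min_le_left _ _) ?_
      Hcont.measurable.aemeasurable hge
    refine ne_top_of_le_ne_top ENNReal.one_ne_top ?_
    rw [← hmass]
    exact lintegral_mono fun x => min_le_left _ _
  have hupper : ∀ x, H x ≤ Ex (a + b) := by
    intro x
    by_contra! hx
    obtain ⟨n, hn, hsub⟩ := exists_cyl_subset (isOpen_lt continuous_const Hcont) (x := x) hx
    have h0 : ν (cyl A n x.1) = 0 := by
      refine measure_mono_null ?_ (ae_iff.mp hae)
      intro y hy hyeq
      have h1 : Ex (a + b) < H y := hsub hy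
      have h2 : min (H y) (Ex (a + b)) = H y := hyeq
      rw [min_eq_right h1.le] at h2
      exact absurd h2 h1.ne
    have := hnulo n x hn
    rw [h0] at this
    exact absurd this (not_le.mpr (Ex_pos _))
  constructor
  · exact (ENNReal.ofReal_le_ofReal_iff (hpos x).le).mp (hlower x)
  · exact (ENNReal.ofReal_le_ofReal_iff (Real.exp_pos _).le).mp (hupper x)

end Core

end MarkovShift

namespace MarkovShift

section Final

variable {A : ℕ → ℕ → Bool}

theorem birkhoff_one (f : MarkovShift A → ℝ) (x : MarkovShift A) : birkhoff f 1 x = f x := by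
  simp [birkhoff]

theorem continuous_of_walters {f : MarkovShift A → ℝ} (hW : SatisfiesWalters f) : Continuous f := by
  rw [continuous_iff_continuousAt]
  intro x
  refine Metric.tendsto_nhds.mpr fun ε hε => ?_
  obtain ⟨k, hk, hk1⟩ := ((hW.2.eventually (gt_mem_nhds hε)).and (eventually_ge_atTop 1)).exists
  have hmem : cyl A (1 + k) x.1 ∈ 𝓝 x :=
    (isClopen_cyl (1 + k) x.1).isOpen.mem_nhds (fun _ _ => rfl)
  filter_upwards [hmem] with y hy
  refine lt_of_le_of_lt ?_ hk
  refine le_csSup (hW.1 k hk1) ⟨1, le_rfl, y, x, hy, ?_⟩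
  rw [birkhoff_one, birkhoff_one, Real.dist_eq]

theorem exists_var_bound {f : MarkovShift A → ℝ} (hW : SatisfiesWalters f) (h1 : Var1Finite f) :
    ∃ V : ℝ, ∀ n (x y : MarkovShift A), (∀ i < n, x.1 i = y.1 i) →
      |birkhoff f n x - birkhoff f n y| ≤ V := by
  obtain ⟨M, hM⟩ := hW.1 1 le_rfl
  obtain ⟨V, hV⟩ := h1
  refine ⟨|M| + |V|, ?_⟩
  intro n x y hxy
  have hp1 := abs_nonneg M
  have hp2 := abs_nonneg V
  cases n with
  | zero => simp only [birkhoff, Finset.range_zero, Finset.sum_empty, sub_self, abs_zero]; linarith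
  | succ n =>
    have e1 : |birkhoff f n x - birkhoff f n y| ≤ |M| := by
      rcases Nat.eq_zero_or_pos n with rfl | hn
      · simp [birkhoff]
      · exact (hM ⟨n, hn, x, y, hxy, rfl⟩).trans (le_abs_self M)
    have e2 : |birkhoff f 1 (shift^[n] x) - birkhoff f 1 (shift^[n] y)| ≤ |V| := by
      refine (hV ⟨shift^[n] x, shift^[n] y, ?_, rfl⟩).trans (le_abs_self V)
      intro i hi
      rw [shift_iter, shift_iter]
      exact hxy _ (by omega)
    rw [birkhoff_add, birkhoff_add]
    calc _ = |(birkhoff f n x - birkhoff f n y) +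
          (birkhoff f 1 (shift^[n] x) - birkhoff f 1 (shift^[n] y))| := by congr 1; ring
      _ ≤ _ := (abs_add_le _ _).trans (add_le_add e1 e2)

theorem exists_symbol_bound {f : MarkovShift A → ℝ} (h1 : Var1Finite f) (c : ℕ) :
    ∃ B : ℝ, ∀ y : MarkovShift A, y.1 0 = c → |f y| ≤ B := by
  obtain ⟨V, hV⟩ := h1
  by_cases h : ∃ z : MarkovShift A, z.1 0 = c
  · obtain ⟨z, hz⟩ := h
    refine ⟨|f z| + V, fun y hy => ?_⟩
    have h2 : |birkhoff f 1 y - birkhoff f 1 z| ≤ V := by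
      refine hV ⟨y, z, ?_, rfl⟩
      intro i hi
      obtain rfl : i = 0 := by omega
      exact hy.trans hz.symm
    rw [birkhoff_one, birkhoff_one] at h2
    have h3 := abs_sub_abs_le_abs_sub (f y) (f z)
    linarith
  · exact ⟨0, fun y hy => absurd ⟨y, hy⟩ h⟩

theorem glue_word (w : List ℕ) (c : ℕ) (x : MarkovShift A)
    (h : List.IsChain (fun u v => A u v = true) (c :: (w ++ [x.1 0]))) :
    ∃ y : MarkovShift A, shift^[w.length] y = x ∧ A c (y.1 0) = true ∧
      ∀ i < w.length, y.1 i ∈ w := by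
  induction w generalizing c with
  | nil => exact ⟨x, rfl, by simpa using h, by simp⟩
  | cons d w ih =>
    rw [List.cons_append, List.isChain_cons_cons] at h
    obtain ⟨y, hy1, hy2, hy3⟩ := ih d h.2
    refine ⟨cons d y, ?_, ?_, ?_⟩
    · rw [List.length_cons, Function.iterate_succ_apply, shift_cons hy2, hy1]
    · rw [cons_zero hy2]; exact h.1
    · intro i hi
      cases i with
      | zero => rw [cons_zero hy2]; exact List.mem_cons_self
      | succ i =>
        rw [cons_succ hy2]
        exact List.mem_cons_of_mem _ (hy3 i (by simpa using hi))

theorem glue_start (m : ℕ) (z y : MarkovShift A) (h : A (z.1 m) (y.1 0) = true) :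
    ∃ v : MarkovShift A, (∀ i < m + 1, v.1 i = z.1 i) ∧ shift^[m + 1] v = y := by
  induction m generalizing z with
  | zero =>
    refine ⟨cons (z.1 0) y, ?_, shift_cons h⟩
    intro i hi
    obtain rfl : i = 0 := by omega
    exact cons_zero h
  | succ m ih =>
    obtain ⟨v, hv1, hv2⟩ := ih (shift z) h
    have h0 : v.1 0 = z.1 1 := hv1 0 (by omega)
    have hA : A (z.1 0) (v.1 0) = true := by
      rw [h0]; exact z.2 0
    refine ⟨cons (z.1 0) v, ?_, ?_⟩
    · intro i hi
      cases i with
      | zero => exact cons_zero hA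
      | succ i => rw [cons_succ hA]; exact hv1 i (by omega)
    · rw [Function.iterate_succ_apply, shift_cons hA, hv2]

theorem Q_eq (F : MarkovShift A → ℝ) (p : ℝ) (u : MarkovShift A → ℝ) (hu : ∀ x, 0 ≤ u x)
    (x : MarkovShift A)
    (hs : Summable fun y : {y : MarkovShift A // shift y = x} => Real.exp (F y.1) * u y.1) :
    Q (fun x => F x - p) (fun x => ENNReal.ofReal (u x)) x =
      Ex (-p) * ENNReal.ofReal (ruelle F u x) := by
  unfold ruelle
  rw [ENNReal.ofReal_tsum_of_nonneg (fun y => mul_nonneg (Real.exp_pos _).le (hu _)) hs,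
    tsum_fiber (fun y => ENNReal.ofReal (Real.exp (F y) * u y)) x, ← ENNReal.tsum_mul_left]
  unfold Q
  congr 1
  funext a
  split_ifs
  · rw [ENNReal.ofReal_mul (Real.exp_pos _).le, ← mul_assoc]
    congr 1
    show Ex (F (cons a x) - p) = _
    rw [sub_eq_neg_add, Ex_add]
    rfl
  · simp

theorem Q_h {F : MarkovShift A → ℝ} {p : ℝ} {h : MarkovShift A → ℝ}
    {ν : Measure (MarkovShift A)} (hR : IsRPF F p h ν) :
    Q (fun x => F x - p) (fun x => ENNReal.ofReal (h x)) = fun x => ENNReal.ofReal (h x) := by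
  obtain ⟨_, hpos, heig, _⟩ := hR
  funext x
  have hne : ruelle F h x ≠ 0 := by
    rw [heig]
    exact (mul_pos (Real.exp_pos _) (hpos x)).ne'
  rw [Q_eq F p h (fun x => (hpos x).le) x
    (by by_contra hn; exact hne (tsum_eq_zero_of_not_summable hn)), heig, Ex,
    ← ENNReal.ofReal_mul (Real.exp_pos _).le, ← mul_assoc, ← Real.exp_add]
  simp

theorem Qdual_eq {F : MarkovShift A → ℝ} {p : ℝ} {h : MarkovShift A → ℝ}
    {ν : Measure (MarkovShift A)} (hR : IsRPF F p h ν) (hF : Continuous F)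
    (hb : ∀ c, ∃ B : ℝ, ∀ y : MarkovShift A, y.1 0 = c → |F y| ≤ B) :
    Qdual (fun x => F x - p) ν = ν := by
  obtain ⟨_, _, _, hprob, hdual, _⟩ := hR
  have hφ : Continuous (fun x => F x - p) := hF.sub continuous_const
  symm
  apply measure_ext
  intro n w hn
  have hm := meas_cyl (A := A) n w
  set u : MarkovShift A → ℝ := (cyl A n w).indicator (fun _ => 1) with hu
  have hu0 : ∀ x, 0 ≤ u x := fun x => Set.indicator_nonneg (fun _ _ => zero_le_one) x
  have huc : Continuous u := continuous_const.indicator (fun x hx => by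
    rw [(isClopen_cyl n w).frontier_eq] at hx
    exact absurd hx (Set.notMem_empty x))
  have hub : BoundedFun u := ⟨1, fun x => by
    by_cases hx : x ∈ cyl A n w
    · simp [hu, hx]
    · simp [hu, hx]⟩
  have huE : (fun x => ENNReal.ofReal (u x)) = (cyl A n w).indicator (fun _ => 1) := by
    funext x
    by_cases hx : x ∈ cyl A n w
    · simp [hu, hx]
    · simp [hu, hx]
  have hgm : Measurable (fun x => ENNReal.ofReal (u x)) := huc.measurable.ennreal_ofReal
  have hsum : ∀ x, Summable fun y : {y : MarkovShift A // shift y = x} =>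
      Real.exp (F y.1) * u y.1 := by
    intro x
    apply summable_of_hasFiniteSupport
    apply Set.Subsingleton.finite
    intro y hy y' hy'
    have hmem : ∀ y : {y : MarkovShift A // shift y = x}, Real.exp (F y.1) * u y.1 ≠ 0 →
        y.1 = cons (w 0) x := by
      intro t ht
      have h1 : t.1 ∈ cyl A n w := by
        by_contra h2
        apply ht
        rw [hu, Set.indicator_of_notMem h2, mul_zero]
      have h3 := cons_shift t.1
      rw [t.2, h1 0 (by omega)] at h3
      exact h3.symm
    exact Subtype.ext ((hmem y hy).trans (hmem y' hy').symm)
  have hkey := fun x => Q_eq F p u hu0 x (hsum x)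
  have hr0 : ∀ x, 0 ≤ ruelle F u x := fun x =>
    tsum_nonneg fun y => mul_nonneg (Real.exp_pos _).le (hu0 _)
  have hkey2 : ∀ x, ENNReal.ofReal (ruelle F u x) =
      Ex p * Q (fun x => F x - p) (fun x => ENNReal.ofReal (u x)) x := by
    intro x
    rw [hkey, ← mul_assoc, ← Ex_add]
    simp [Ex_zero]
  have hQm := measurable_Q hφ hgm
  have hrm : Measurable (ruelle F u) := by
    have : ruelle F u = fun x =>
        (Ex p * Q (fun x => F x - p) (fun x => ENNReal.ofReal (u x)) x).toReal := by
      funext x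
      rw [← hkey2, ENNReal.toReal_ofReal (hr0 x)]
    rw [this]
    exact (hQm.const_mul _).ennreal_toReal
  have h1 := hdual u huc hub
  rw [integral_eq_lintegral_of_nonneg_ae (Eventually.of_forall hr0) hrm.aestronglyMeasurable,
    integral_eq_lintegral_of_nonneg_ae (Eventually.of_forall hu0)
      huc.measurable.aestronglyMeasurable] at h1
  simp_rw [hkey2] at h1
  rw [lintegral_const_mul _ hQm, ENNReal.toReal_mul, Ex, ENNReal.toReal_ofReal (Real.exp_pos _).le]
    at h1
  have h2 := mul_left_cancel₀ (Real.exp_pos p).ne' h1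
  have hν : ∫⁻ x, ENNReal.ofReal (u x) ∂ν = ν (cyl A n w) := by
    rw [huE, lintegral_indicator hm]
    simp
  have hfin : ∫⁻ x, Q (fun x => F x - p) (fun x => ENNReal.ofReal (u x)) x ∂ν ≠ ∞ := by
    obtain ⟨B, hB⟩ := hb (w 0)
    have hle : ∀ x, Q (fun x => F x - p) (fun x => ENNReal.ofReal (u x)) x ≤ Ex (B - p) := by
      intro x
      rw [huE]
      unfold Q
      rw [tsum_eq_single (w 0)]
      · split_ifs with hA
        · calc _ ≤ Ex (B - p) * 1 := by
                refine mul_le_mul' (Ex_mono ?_) ?_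
                · have := (abs_le.mp (hB _ (cons_zero hA))).2
                  linarith
                · exact Set.indicator_le_self _ _ _
            _ = _ := mul_one _
        · exact bot_le
      · intro a ha
        split_ifs with hA
        · rw [Set.indicator_of_notMem, mul_zero]
          intro hz
          have := hz 0 (by omega)
          rw [cons_zero hA] at this
          exact ha this
        · rfl
    refine ne_top_of_le_ne_top (Ex_ne_top (B - p)) ((lintegral_mono hle).trans ?_)
    simp
  rw [hν] at h2
  have h3 := (ENNReal.toReal_eq_toReal_iff' hfin (measure_ne_top _ _)).mp h2
  rw [← h3, ← lintegral_Qdual hφ ν hgm, huE, lintegral_indicator hm]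
  simp

theorem birkhoff_affine (f : MarkovShift A → ℝ) (β p : ℝ) (n : ℕ) (x : MarkovShift A) :
    birkhoff (fun x => β * f x - p) n x = β * birkhoff f n x - n * p := by
  simp [birkhoff, Finset.sum_sub_distrib, Finset.mul_sum]

theorem per_beta (hbip : FinitelyPrimitive A) (f : MarkovShift A → ℝ)
    (hW : SatisfiesWalters f) (hV1 : Var1Finite f) :
    ∃ (C : ℝ) (K : ℕ), ∀ (β : ℝ) (p q : ℝ) (h : MarkovShift A → ℝ) (ν : Measure (MarkovShift A)),
      0 < β → IsRPF (fun x => β * f x) p h ν → p ≤ β * q →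
      Qdual (fun x => β * f x - p) ν = ν ∧
      ∀ x, Real.exp (-((C + K * q) * β)) ≤ h x ∧ h x ≤ Real.exp ((C + K * q) * β) := by
  obtain ⟨K, F, hKF⟩ := hbip
  obtain ⟨V, hV⟩ := exists_var_bound hW hV1
  choose B hB using exists_symbol_bound hV1
  have hCF : ∀ y : MarkovShift A, y.1 0 ∈ F → |f y| ≤ ∑ c ∈ F, |B c| := fun y hy =>
    (hB _ y rfl).trans ((le_abs_self _).trans
      (Finset.single_le_sum (f := fun c => |B c|) (fun c _ => abs_nonneg _) hy))
  set CF := ∑ c ∈ F, |B c|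
  refine ⟨2 * V + K * CF, K, ?_⟩
  intro β p q h ν hβ hR hpq
  have hfc := continuous_of_walters hW
  have hd : Qdual (fun x => β * f x - p) ν = ν := by
    refine Qdual_eq hR (continuous_const.mul hfc) fun c => ⟨β * B c, fun y hy => ?_⟩
    rw [abs_mul, abs_of_pos hβ]
    exact mul_le_mul_of_nonneg_left (hB c y hy) hβ.le
  refine ⟨hd, ?_⟩
  have hQh := Q_h hR
  obtain ⟨hcont, hpos, _, hprob, _, hmass⟩ := hR
  have hmass' : ∫⁻ x, ENNReal.ofReal (h x) ∂ν = 1 := by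
    have hi : Integrable h ν := by
      by_contra hn
      rw [integral_undef hn] at hmass
      exact zero_ne_one hmass
    rw [← ofReal_integral_eq_lintegral_ofReal hi (Eventually.of_forall fun x => (hpos x).le), hmass]
    simp
  have hc := core (fun x => β * f x - p) ((continuous_const.mul hfc).sub continuous_const) ν hd h
    hcont hpos hQh hmass' K (β * V) (β * (V + K * CF + K * q)) ?_ ?_
  · intro x
    have := hc x
    rw [show (2 * V + K * CF + K * q) * β = β * V + β * (V + K * CF + K * q) by ring]
    exact this
  · intro n x y hxy
    rw [birkhoff_affine, birkhoff_affine]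
    have := (abs_le.mp (hV n x y hxy)).2
    nlinarith
  · intro z x m hm
    obtain ⟨m, rfl⟩ : ∃ k, m = k + 1 := ⟨m - 1, by omega⟩
    obtain ⟨w, hwl, hwF, hwc⟩ := hKF (z.1 m) (x.1 0) ⟨shift^[m] z, by rw [shift_iter]; simp⟩
      ⟨x, rfl⟩
    obtain ⟨y, hy1, hy2, hy3⟩ := glue_word w (z.1 m) x hwc
    obtain ⟨v, hv1, hv2⟩ := glue_start m z y hy2
    rw [hwl] at hy1 hy3
    refine ⟨v, hv1, ?_, ?_⟩
    · rw [add_comm, Function.iterate_add_apply, hv2, hy1]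
    · rw [birkhoff_add _ (m + 1) K, hv2, birkhoff_affine, birkhoff_affine, birkhoff_affine]
      have e1 := (abs_le.mp (hV (m + 1) v z hv1)).1
      have e2 : -(K * CF) ≤ birkhoff f K y := by
        have : ∑ j ∈ Finset.range K, (-CF) ≤ birkhoff f K y := by
          refine Finset.sum_le_sum fun j hj => ?_
          refine (abs_le.mp (hCF (shift^[j] y) ?_)).1
          rw [shift_iter, zero_add]
          exact hwF _ (hy3 j (Finset.mem_range.mp hj))
        simpa using this
      have e3 : (K : ℝ) * p ≤ K * (β * q) := mul_le_mul_of_nonneg_left hpq (Nat.cast_nonneg K)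
      have e4 := mul_le_mul_of_nonneg_left e1 hβ.le
      have e5 := mul_le_mul_of_nonneg_left e2 hβ.le
      linarith

theorem main_bounds (hbip : FinitelyPrimitive A) (f : MarkovShift A → ℝ)
    (hW : SatisfiesWalters f) (hV1 : Var1Finite f) (P : ℝ → ℝ)
    (h : ℝ → MarkovShift A → ℝ) (ν : ℝ → Measure (MarkovShift A))
    (hRPF : ∀ β : ℝ, 0 < β → IsRPF (fun x => β * f x) (P β) (h β) (ν β)) :
    ∃ C₁ C₂ : ℝ, ∀ β : ℝ, 1 ≤ β → ∀ x : MarkovShift A,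
      Real.exp (C₁ * β) ≤ h β x ∧ h β x ≤ Real.exp (C₂ * β) := by
  obtain ⟨C, K, hC⟩ := per_beta hbip f hW hV1
  have hb1 := (hC 1 (P 1) (P 1) (h 1) (ν 1) one_pos (hRPF 1 one_pos) (by simp)).2
  set c := (C + K * P 1) * 1 with hcdef
  have hfc := continuous_of_walters hW
  have hQ1 : ∀ x, Q (fun x => 1 * f x - P 1) (fun _ => 1) x ≤ Ex (2 * c) := by
    intro x
    have e1 := congrFun (Q_h (hRPF 1 one_pos)) x
    have e2 : Ex (-c) * Q (fun x => 1 * f x - P 1) (fun _ => 1) x ≤ Ex c := by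
      have e3 := congrFun (Qn_const_mul (φ := fun x => 1 * f x - P 1) 1 (Ex (-c)) (fun _ => 1)) x
      simp only [Function.iterate_one] at e3
      rw [← e3]
      refine le_trans (Q_mono (fun y => ?_) x) (e1.trans_le ?_)
      · rw [mul_one]
        exact ENNReal.ofReal_le_ofReal (hb1 y).1
      · exact ENNReal.ofReal_le_ofReal (hb1 x).2
    calc Q (fun x => 1 * f x - P 1) (fun _ => 1) x
        = Ex c * (Ex (-c) * Q (fun x => 1 * f x - P 1) (fun _ => 1) x) := by
          rw [← mul_assoc, ← Ex_add]; simp [Ex_zero]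
      _ ≤ Ex c * Ex c := mul_le_mul_right e2 _
      _ = Ex (2 * c) := by rw [← Ex_add]; congr 1; ring
  have hf : ∀ y, f y - P 1 ≤ 2 * c := by
    intro y
    have e1 := (Q_ge (fun x => 1 * f x - P 1) (fun _ => 1) y).trans (hQ1 _)
    rw [mul_one] at e1
    have e2 := (ENNReal.ofReal_le_ofReal_iff (Real.exp_pos _).le).mp e1
    have e3 := Real.exp_le_exp.mp e2
    linarith
  have hP : ∀ β, 1 ≤ β → P β ≤ β * (2 * c + P 1) := by
    intro β hβ
    have hβ0 : 0 < β := by linarith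
    have hd := (hC β (P β) (P β / β) (h β) (ν β) hβ0 (hRPF β hβ0) (by field_simp; exact le_rfl)).1
    have hprob : IsProbabilityMeasure (ν β) := (hRPF β hβ0).2.2.2.1
    have e1 : ∀ x, Q (fun x => β * f x - P β) (fun _ => 1) x ≤
        Ex (β * (2 * c + P 1) - P β) := by
      intro x
      have e2 : Q (fun x => β * f x - P β) (fun _ => 1) x ≤
          Ex ((β - 1) * (2 * c) + β * P 1 - P β) * Q (fun x => 1 * f x - P 1) (fun _ => 1) x := by
        unfold Q
        rw [← ENNReal.tsum_mul_left]
        refine ENNReal.tsum_le_tsum fun a => ?_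
        split_ifs
        · rw [mul_one, mul_one, ← Ex_add]
          apply Ex_mono
          have := mul_le_mul_of_nonneg_left (hf (cons a x)) (sub_nonneg.mpr hβ)
          linarith
        · simp
      refine e2.trans ((mul_le_mul_right (hQ1 x) _).trans_eq ?_)
      rw [← Ex_add]
      congr 1
      ring
    have e3 := lintegral_Qdual (φ := fun x => β * f x - P β)
      ((continuous_const.mul hfc).sub continuous_const) (ν β) (g := fun _ => 1) measurable_const
    rw [hd] at e3
    have e4 := e3.trans_le (lintegral_mono e1)
    simp only [lintegral_const, measure_univ, mul_one] at e4
    rw [← Ex_zero] at e4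
    have e5 := (ENNReal.ofReal_le_ofReal_iff (Real.exp_pos _).le).mp e4
    have e6 := Real.exp_le_exp.mp e5
    linarith
  refine ⟨-(C + K * (2 * c + P 1)), C + K * (2 * c + P 1), fun β hβ x => ?_⟩
  have hβ0 : 0 < β := by linarith
  have := (hC β (P β) (2 * c + P 1) (h β) (ν β) hβ0 (hRPF β hβ0) (hP β hβ)).2 x
  rw [neg_mul]
  exact this

end Final

end MarkovShift

namespace MarkovShift

/-- There are constants `C₁, C₂` with `e^{C₁ β} ≤ h_β ≤ e^{C₂ β}` for all `β ≥ 1`. -/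
theorem eigenfunction_exponential_bounds
    (A : ℕ → ℕ → Bool)
    (hmix : TopologicallyMixing A)
    (hbip : FinitelyPrimitive A)
    (f : MarkovShift A → ℝ)
    (hWalters : SatisfiesWalters f)
    (hVar1 : Var1Finite f)
    (P : ℝ → ℝ)
    (hPfin : HasGurevichPressure f (P 1))
    (h : ℝ → MarkovShift A → ℝ)
    (ν : ℝ → Measure (MarkovShift A))
    (hRPF : ∀ β : ℝ, 0 < β → IsRPF (fun x => β * f x) (P β) (h β) (ν β)) :
    ∃ C₁ C₂ : ℝ, ∀ β : ℝ, 1 ≤ β → ∀ x : MarkovShift A,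
      Real.exp (C₁ * β) ≤ h β x ∧ h β x ≤ Real.exp (C₂ * β) := by
  exact main_bounds hbip f hWalters hVar1 P h ν hRPF

end MarkovShift
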